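/- arXiv:1508.02666 — 4 statements merged into one kernel-verified Lean document; each statement's English description precedes it below -/
import Mathlib

section
/- Let F be a finite family of dyadic cubes in [0,1]³ (possibly of different levels) whose interiors are pairwise disjoint. Then the number of unordered pairs {Q, Q'} of distinct cubes in F that are adjacent (closed intersection nonempty) is at most 26·|F|. -/
/-- A dyadic cube of level `l` in `[0,1]³`, recorded by its level and the integer
coordinates `a i < 2 ^ l` of its lower corner. -/
structure DyadicCube where
  l : ℕ
  a : Fin 3 → ℕ
  ha : ∀ i, a i < 2 ^ l

/-- The closed cube `∏ᵢ [aᵢ·2^{-l}, (aᵢ+1)·2^{-l}] ⊆ [0,1]³` associated to a dyadic cube. -/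
def DyadicCube.toSet (Q : DyadicCube) : Set (Fin 3 → ℝ) :=
  {x | ∀ i, (Q.a i : ℝ) / 2 ^ Q.l ≤ x i ∧ x i ≤ ((Q.a i : ℝ) + 1) / 2 ^ Q.l}

/-- Two dyadic cubes are adjacent if their (closed) intersection is nonempty. -/
def DyadicCube.Adjacent (Q Q' : DyadicCube) : Prop :=
  (Q.toSet ∩ Q'.toSet).Nonempty

theorem DyadicCube.mem_interior_of (Q : DyadicCube) (x : Fin 3 → ℝ)
    (h : ∀ i, (Q.a i : ℝ) / 2 ^ Q.l < x i ∧ x i < ((Q.a i : ℝ) + 1) / 2 ^ Q.l) :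
    x ∈ interior Q.toSet := by
  rw [mem_interior]
  refine ⟨Set.pi Set.univ (fun i => Set.Ioo ((Q.a i : ℝ) / 2 ^ Q.l) (((Q.a i : ℝ) + 1) / 2 ^ Q.l)),
    ?_, isOpen_set_pi Set.finite_univ (fun i _ => isOpen_Ioo), fun i _ => h i⟩
  intro y hy i
  exact ⟨(hy i trivial).1.le, (hy i trivial).2.le⟩

theorem DyadicCube.offset_one (Q Q' : DyadicCube) (hl : Q'.l ≤ Q.l) (h : Q.Adjacent Q')
    (i : Fin 3) : ∃ d : Fin 3,
      (Q'.a i : ℝ) / 2 ^ Q'.l < ((Q.a i : ℝ) + ((d : ℕ) : ℝ) - 1 / 2) / 2 ^ Q.l ∧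
      ((Q.a i : ℝ) + ((d : ℕ) : ℝ) - 1 / 2) / 2 ^ Q.l < ((Q'.a i : ℝ) + 1) / 2 ^ Q'.l := by
  obtain ⟨x, hx, hx'⟩ := h
  obtain ⟨h1, h2⟩ := hx i
  obtain ⟨h3, h4⟩ := hx' i
  obtain ⟨k, hk⟩ := Nat.exists_eq_add_of_le hl
  have e1 := h3.trans h2
  have e2 := h1.trans h4
  rw [hk, pow_add] at e1 e2 ⊢
  have hp : (0 : ℝ) < 2 ^ Q'.l := by positivity
  have hq : (0 : ℝ) < 2 ^ k := by positivity
  have hq1 : 1 ≤ 2 ^ k := Nat.one_le_two_pow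
  generalize (2 : ℝ) ^ Q'.l = p at *
  have key1 : ∀ u v : ℝ, u / p ≤ v / (p * 2 ^ k) ↔ u * 2 ^ k ≤ v := by
    intro u v
    rw [← div_div, div_right_comm, div_le_div_iff_of_pos_right hp, le_div_iff₀ hq]
  have key2 : ∀ u v : ℝ, v / (p * 2 ^ k) ≤ u / p ↔ v ≤ u * 2 ^ k := by
    intro u v
    rw [← div_div, div_right_comm, div_le_div_iff_of_pos_right hp, div_le_iff₀ hq]
  have key3 : ∀ u v : ℝ, u / p < v / (p * 2 ^ k) ↔ u * 2 ^ k < v := by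
    intro u v
    rw [← not_le, key2, not_le]
  have key4 : ∀ u v : ℝ, v / (p * 2 ^ k) < u / p ↔ v < u * 2 ^ k := by
    intro u v
    rw [← not_le, key1, not_le]
  rw [key1] at e1
  rw [key2] at e2
  simp only [key3, key4]
  have n1 : Q'.a i * 2 ^ k ≤ Q.a i + 1 := by exact_mod_cast e1
  have n2 : Q.a i ≤ Q'.a i * 2 ^ k + 2 ^ k := by
    have : Q.a i ≤ (Q'.a i + 1) * 2 ^ k := by exact_mod_cast e2
    linarith
  have fin : ∃ d : Fin 3, Q'.a i * 2 ^ k + 1 ≤ Q.a i + d ∧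
      Q.a i + d ≤ Q'.a i * 2 ^ k + 2 ^ k := by
    generalize Q'.a i * 2 ^ k = A at *
    generalize 2 ^ k = B at *
    by_cases c1 : Q.a i + 1 = A
    · exact ⟨2, by simp; omega, by simp; omega⟩
    · by_cases c2 : Q.a i = A + B
      · exact ⟨0, by simp; omega, by simp; omega⟩
      · exact ⟨1, by simp; omega, by simp; omega⟩
  obtain ⟨d, d1, d2⟩ := fin
  have d1' : (Q'.a i : ℝ) * 2 ^ k + 1 ≤ Q.a i + ((d : ℕ) : ℝ) := by exact_mod_cast d1
  have d2' : (Q.a i : ℝ) + ((d : ℕ) : ℝ) ≤ Q'.a i * 2 ^ k + 2 ^ k := by exact_mod_cast d2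
  exact ⟨d, by linarith, by linarith⟩

/-- Center of the translate of `Q` by `d - 1`. -/
noncomputable def DyadicCube.ctr (Q : DyadicCube) (d : Fin 3 → Fin 3) : Fin 3 → ℝ :=
  fun i => ((Q.a i : ℝ) + ((d i : ℕ) : ℝ) - 1 / 2) / 2 ^ Q.l

theorem DyadicCube.exists_offset (Q Q' : DyadicCube) (hl : Q'.l ≤ Q.l) (h : Q.Adjacent Q') :
    ∃ d : Fin 3 → Fin 3, Q.ctr d ∈ interior Q'.toSet := by
  choose d hd using Q.offset_one Q' hl h
  exact ⟨d, Q'.mem_interior_of _ hd⟩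

theorem DyadicCube.ctr_one (Q : DyadicCube) : Q.ctr (fun _ => 1) ∈ interior Q.toSet := by
  apply Q.mem_interior_of
  intro i
  have hp : (0 : ℝ) < 2 ^ Q.l := by positivity
  simp only [DyadicCube.ctr]
  constructor <;> rw [div_lt_div_iff_of_pos_right hp] <;> norm_num <;> linarith

open Classical in
theorem DyadicCube.card_coarser (F : Finset DyadicCube)
    (hdisj : ∀ Q ∈ F, ∀ Q' ∈ F, Q ≠ Q' → interior Q.toSet ∩ interior Q'.toSet = ∅)
    (Q : DyadicCube) (hQ : Q ∈ F) :
    (F.filter (fun Q' => Q ≠ Q' ∧ Q'.l ≤ Q.l ∧ Q.Adjacent Q')).card ≤ 26 := by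
  have uniq : ∀ A ∈ F, ∀ B ∈ F, ∀ x, x ∈ interior A.toSet → x ∈ interior B.toSet → A = B := by
    intro A hA B hB x h1 h2
    by_contra hne
    have : x ∈ interior A.toSet ∩ interior B.toSet := ⟨h1, h2⟩
    rw [hdisj A hA B hB hne] at this
    exact this
  have hex : ∀ Q' : DyadicCube, ∃ d : Fin 3 → Fin 3, (Q'.l ≤ Q.l ∧ Q.Adjacent Q') →
      Q.ctr d ∈ interior Q'.toSet := by
    intro Q'
    by_cases h : Q'.l ≤ Q.l ∧ Q.Adjacent Q'
    · obtain ⟨d, hd⟩ := Q.exists_offset Q' h.1 h.2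
      exact ⟨d, fun _ => hd⟩
    · exact ⟨fun _ => 0, fun h' => absurd h' h⟩
  choose f hf using hex
  have hc : ((Finset.univ : Finset (Fin 3 → Fin 3)).erase (fun _ => 1)).card = 26 := by
    rw [Finset.card_erase_of_mem (Finset.mem_univ _)]
    simp
  rw [← hc]
  apply Finset.card_le_card_of_injOn f
  · intro Q' h'
    simp only [Finset.coe_filter, Set.mem_setOf_eq] at h'
    simp only [Finset.coe_erase, Finset.coe_univ, Set.mem_diff, Set.mem_univ, true_and,
      Set.mem_singleton_iff]
    intro he
    have := hf Q' h'.2.2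
    rw [he] at this
    exact h'.2.1 (uniq Q hQ Q' h'.1 _ Q.ctr_one this)
  · intro A hA B hB hAB
    simp only [Finset.coe_filter, Set.mem_setOf_eq] at hA hB
    have h1 := hf A hA.2.2
    have h2 := hf B hB.2.2
    rw [← hAB] at h2
    exact uniq A hA.1 B hB.1 _ h1 h2

/-- If `F` is a finite family of dyadic cubes in `[0,1]³` with pairwise
disjoint interiors, then the number of unordered pairs `{Q, Q'}` of distinct cubes of `F`
that are adjacent is at most `26·|F|`. -/
theorem card_adjacent_pairs_le_26_mul_card
    (F : Finset DyadicCube)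
    (hdisj : ∀ Q ∈ F, ∀ Q' ∈ F, Q ≠ Q' →
      interior Q.toSet ∩ interior Q'.toSet = ∅) :
    {S : Set DyadicCube | ∃ Q Q', Q ∈ F ∧ Q' ∈ F ∧ Q ≠ Q' ∧ Q.Adjacent Q' ∧
      S = {Q, Q'}}.ncard ≤ 26 * F.card := by
  classical
  let T : Finset (Set DyadicCube) := F.biUnion (fun Q =>
    (F.filter (fun Q' => Q ≠ Q' ∧ Q'.l ≤ Q.l ∧ Q.Adjacent Q')).image
      (fun Q' => ({Q, Q'} : Set DyadicCube)))
  have hsub : {S : Set DyadicCube | ∃ Q Q', Q ∈ F ∧ Q' ∈ F ∧ Q ≠ Q' ∧ Q.Adjacent Q' ∧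
      S = {Q, Q'}} ⊆ (T : Set (Set DyadicCube)) := by
    rintro S ⟨Q, Q', hQ, hQ', hne, hadj, rfl⟩
    simp only [T, Finset.mem_coe, Finset.mem_biUnion, Finset.mem_image, Finset.mem_filter]
    rcases le_total Q'.l Q.l with hl | hl
    · exact ⟨Q, hQ, Q', ⟨hQ', hne, hl, hadj⟩, rfl⟩
    · refine ⟨Q', hQ', Q, ⟨hQ, hne.symm, hl, ?_⟩, Set.pair_comm _ _⟩
      unfold DyadicCube.Adjacent at hadj ⊢
      rwa [Set.inter_comm]
  refine (Set.ncard_le_ncard hsub T.finite_toSet).trans ?_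
  rw [Set.ncard_coe_finset, mul_comm]
  apply Finset.card_biUnion_le_card_mul
  intro Q hQ
  refine Finset.card_image_le.trans ?_
  convert DyadicCube.card_coarser F hdisj Q hQ
end

section
/- For every γ ∈ (0,1), the Hausdorff dimension of the generalized Cantor set C_γ equals log 2 / log(2/(1−γ)). -/
/-- The generalized Cantor set `C_γ`: with `a = (1+γ)/2` and `b = (1−γ)/2`, the set of
sums `∑ dᵢ bⁱ` over sequences with `dᵢ ∈ {0, a}`. -/
def genCantorSet (γ : ℝ) : Set ℝ :=
  {x | ∃ d : ℕ → ℝ, (∀ i, d i = 0 ∨ d i = (1 + γ) / 2) ∧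
       x = ∑' i, d i * ((1 - γ) / 2) ^ i}

open Set Filter Topology MeasureTheory in
/-- Normalised Cantor coding map. -/
noncomputable def KK (c : ℝ) (e : ℕ → Bool) : ℝ := (1 - c) * Cardinal.cantorFunction c e

theorem KK_succ (c : ℝ) (h1 : 0 ≤ c) (h2 : c < 1) (e : ℕ → Bool) :
    KK c e = (if e 0 then 1 - c else 0) + c * KK c (fun n => e (n + 1)) := by
  unfold KK
  rw [Cardinal.cantorFunction_succ e h1 h2]
  cases e 0 <;> simp <;> ring

theorem KK_nonneg (c : ℝ) (h1 : 0 ≤ c) (h2 : c < 1) (e : ℕ → Bool) : 0 ≤ KK c e :=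
  mul_nonneg (by linarith) (tsum_nonneg fun _ => Cardinal.cantorFunctionAux_nonneg h1)

theorem KK_le_one (c : ℝ) (h1 : 0 ≤ c) (h2 : c < 1) (e : ℕ → Bool) : KK c e ≤ 1 := by
  have h := Cardinal.cantorFunction_le (f := e) (g := fun _ => true) h1 h2 (by simp)
  have h' : Cardinal.cantorFunction c (fun _ => true) = (1 - c)⁻¹ := by
    simp [Cardinal.cantorFunction, Cardinal.cantorFunctionAux, tsum_geometric_of_lt_one h1 h2]
  rw [h'] at h
  have h3 : 0 < 1 - c := by linarith
  calc KK c e ≤ (1 - c) * (1 - c)⁻¹ := mul_le_mul_of_nonneg_left h h3.le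
    _ = 1 := mul_inv_cancel₀ h3.ne'

theorem KK_close (c : ℝ) (h1 : 0 ≤ c) (h2 : c < 1) (n : ℕ) : ∀ (e f : ℕ → Bool),
    (∀ i < n, e i = f i) → |KK c e - KK c f| ≤ c ^ n := by
  induction n with
  | zero =>
    intro e f _
    rw [abs_le]
    constructor <;> linarith [KK_nonneg c h1 h2 e, KK_nonneg c h1 h2 f, KK_le_one c h1 h2 e,
      KK_le_one c h1 h2 f]
  | succ n ih =>
    intro e f h
    rw [KK_succ c h1 h2 e, KK_succ c h1 h2 f, h 0 (by omega), add_sub_add_left_eq_sub, ← mul_sub,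
      abs_mul, abs_of_nonneg h1, pow_succ']
    exact mul_le_mul_of_nonneg_left (ih _ _ fun i hi => h (i + 1) (by omega)) h1

theorem KK_sep (c : ℝ) (h1 : 0 ≤ c) (h2 : c < 1) (n : ℕ) : ∀ (e f : ℕ → Bool),
    (∀ i < n, e i = f i) → e n ≠ f n → (1 - 2 * c) * c ^ n ≤ |KK c e - KK c f| := by
  induction n with
  | zero =>
    intro e f _ h
    rw [KK_succ c h1 h2 e, KK_succ c h1 h2 f]
    have A := mul_nonneg h1 (KK_nonneg c h1 h2 (fun n => e (n + 1)))
    have B := mul_nonneg h1 (KK_nonneg c h1 h2 (fun n => f (n + 1)))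
    have A' := mul_le_mul_of_nonneg_left (KK_le_one c h1 h2 (fun n => e (n + 1))) h1
    have B' := mul_le_mul_of_nonneg_left (KK_le_one c h1 h2 (fun n => f (n + 1))) h1
    rw [le_abs]
    cases he : e 0 <;> cases hf : f 0 <;> simp_all
    · right; linarith
    · left; linarith
  | succ n ih =>
    intro e f h h'
    rw [KK_succ c h1 h2 e, KK_succ c h1 h2 f, h 0 (by omega), add_sub_add_left_eq_sub, ← mul_sub,
      abs_mul, abs_of_nonneg h1, pow_succ', mul_left_comm]
    exact mul_le_mul_of_nonneg_left (ih _ _ (fun i hi => h (i + 1) (by omega)) h') h1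

theorem genCantorSet_eq (γ : ℝ) : genCantorSet γ = Set.range (KK ((1 - γ) / 2)) := by
  have hab : 1 - (1 - γ) / 2 = (1 + γ) / 2 := by ring
  ext x
  constructor
  · rintro ⟨d, hd, rfl⟩
    classical
    refine ⟨fun i => decide (d i ≠ 0), ?_⟩
    rw [KK, Cardinal.cantorFunction, ← tsum_mul_left]
    congr 1
    ext i
    by_cases h : d i = 0
    · simp [Cardinal.cantorFunctionAux, h]
    · have := (hd i).resolve_left h
      simp only [Cardinal.cantorFunctionAux, ne_eq, h, not_false_eq_true, decide_true, cond_true]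
      rw [this, hab]
  · rintro ⟨e, rfl⟩
    refine ⟨fun i => if e i then (1 + γ) / 2 else 0, fun i => ?_, ?_⟩
    · cases h : e i <;> simp [h]
    · rw [KK, Cardinal.cantorFunction, ← tsum_mul_left]
      congr 1
      ext i
      cases h : e i <;> simp [Cardinal.cantorFunctionAux, h, hab]

open Set Filter Topology MeasureTheory in
theorem KK_dim_upper (c s : ℝ) (h1 : 0 ≤ c) (h2 : c < 1) (hs : 0 ≤ s) (hcs : c ^ s = 1 / 2) :
    dimH (range (KK c)) ≤ ENNReal.ofReal s := by
  have key : Measure.hausdorffMeasure s (range (KK c)) ≤ 1 := by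
    refine (Measure.hausdorffMeasure_le_liminf_sum (ι := fun n : ℕ => (Fin n → Bool)) s (range (KK c))
      (l := atTop) (fun n => ENNReal.ofReal (c ^ n)) ?_
      (fun n v => KK c '' {e | ∀ i : Fin n, e i = v i}) ?_ ?_).trans ?_
    · have := ENNReal.tendsto_ofReal (tendsto_pow_atTop_nhds_zero_of_lt_one h1 h2)
      simpa using this
    · refine Eventually.of_forall fun n v => Metric.ediam_le_of_forall_dist_le ?_
      rintro _ ⟨e, he, rfl⟩ _ ⟨f, hf, rfl⟩
      exact KK_close c h1 h2 n e f fun i hi => (he ⟨i, hi⟩).trans (hf ⟨i, hi⟩).symm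
    · refine Eventually.of_forall fun n => ?_
      rintro _ ⟨e, rfl⟩
      exact mem_iUnion.2 ⟨fun i => e i, e, fun i => rfl, rfl⟩
    · have : ∀ n : ℕ, ∑ v : Fin n → Bool,
          Metric.ediam (KK c '' {e | ∀ i : Fin n, e i = v i}) ^ s ≤ 1 := by
        intro n
        calc _ ≤ ∑ v : Fin n → Bool, ENNReal.ofReal ((1 / 2) ^ n) := by
              refine Finset.sum_le_sum fun v _ => ?_
              have : ((1 / 2 : ℝ)) ^ n = (c ^ n) ^ s := by
                rw [← hcs, Real.rpow_pow_comm h1]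
              rw [this, ← ENNReal.ofReal_rpow_of_nonneg (pow_nonneg h1 n) hs]
              refine ENNReal.rpow_le_rpow (Metric.ediam_le_of_forall_dist_le ?_) hs
              rintro _ ⟨e, he, rfl⟩ _ ⟨f, hf, rfl⟩
              exact KK_close c h1 h2 n e f fun i hi => (he ⟨i, hi⟩).trans (hf ⟨i, hi⟩).symm
          _ = ENNReal.ofReal (2 ^ n * (1 / 2) ^ n) := by
              rw [ENNReal.ofReal_mul (by positivity), ENNReal.ofReal_pow (p := 2) (by norm_num)]
              simp
          _ = 1 := by rw [← mul_pow]; norm_num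
          _ ≤ 1 := le_rfl
      exact (liminf_le_liminf (Eventually.of_forall this)).trans (by simp)
  have := dimH_le_of_hausdorffMeasure_ne_top (X := ℝ) (d := s.toNNReal) (s := range (KK c))
    (by rw [Real.coe_toNNReal s hs]; exact (key.trans_lt ENNReal.one_lt_top).ne)
  simpa [ENNReal.ofReal] using this

open Set Filter Topology MeasureTheory in
theorem KK_dim_lower (c s : ℝ) (h1 : 0 < c) (h2 : c < 1 / 2) (hs : 0 < s) (hcs : c ^ s = 1 / 2) :
    ENNReal.ofReal s ≤ dimH (range (KK c)) := by
  have h3 : c < 1 := by linarith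
  have hg : 0 < 1 - 2 * c := by linarith
  set G : (ℕ → Bool) → ℝ := fun e => Real.ofDigits (fun i => if e i then (1 : Fin 2) else 0) with hG
  have main : ∀ e f, |G e - G f| ≤ ((1 - 2 * c)⁻¹) ^ s * |KK c e - KK c f| ^ s := by
    intro e f
    by_cases hef : e = f
    · subst hef; simp [Real.zero_rpow hs.ne']
    · have hex : ∃ n, e n ≠ f n := by
        by_contra! h
        exact hef (funext h)
      classical
      have hmin : ∀ i < Nat.find hex, e i = f i := fun i hi => by
        simpa using Nat.find_min hex hi
      have A := KK_sep c h1.le h3 _ e f hmin (Nat.find_spec hex)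
      have B : |G e - G f| ≤ ((2 : ℕ) ^ (Nat.find hex) : ℝ)⁻¹ :=
        Real.abs_ofDigits_sub_ofDigits_le fun i hi => by simp [hmin i hi]
      refine B.trans ?_
      have : (((2 : ℕ) : ℝ) ^ (Nat.find hex))⁻¹ = (c ^ Nat.find hex) ^ s := by
        rw [← Real.rpow_pow_comm h1.le, hcs]; simp
      rw [this, ← Real.mul_rpow (by positivity) (abs_nonneg _)]
      refine Real.rpow_le_rpow (by positivity) ?_ hs.le
      rw [inv_mul_eq_div, le_div_iff₀ hg]
      linarith
  set g : ℝ → ℝ := fun x => G (Function.invFun (KK c) x) with hgd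
  have hold : HolderOnWith (((1 - 2 * c)⁻¹) ^ s).toNNReal s.toNNReal g (range (KK c)) := by
    intro x hx y hy
    have hx' := Function.invFun_eq hx
    have hy' := Function.invFun_eq hy
    have := main (Function.invFun (KK c) x) (Function.invFun (KK c) y)
    rw [hx', hy'] at this
    rw [edist_dist, edist_dist, Real.coe_toNNReal s hs.le,
      ENNReal.ofReal_rpow_of_nonneg dist_nonneg hs.le]
    change _ ≤ ENNReal.ofReal _ * _
    rw [← ENNReal.ofReal_mul (by positivity)]
    exact ENNReal.ofReal_le_ofReal this
  have hspos : 0 < s.toNNReal := Real.toNNReal_pos.2 hs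
  have hd := hold.dimH_image_le hspos
  have hinj : Function.Injective (KK c) := by
    intro e f h
    refine Cardinal.cantorFunction_injective h1 h2 ?_
    exact mul_left_cancel₀ (by linarith : (1 - c) ≠ 0) h
  have hsub : Icc (0 : ℝ) 1 ⊆ g '' range (KK c) := by
    intro y hy
    obtain ⟨d, -, hd⟩ := Real.ofDigits_SurjOn (b := 2) (by norm_num) hy
    refine ⟨_, ⟨fun i => decide (d i = 1), rfl⟩, ?_⟩
    rw [hgd]
    simp only
    rw [Function.leftInverse_invFun hinj, ← hd, hG]
    simp only
    congr 1
    ext i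
    have : d i = 0 ∨ d i = 1 := by omega
    rcases this with h | h <;> simp [h]
  have h1' : (1 : ENNReal) ≤ dimH (g '' range (KK c)) := by
    refine le_trans ?_ (dimH_mono hsub)
    rw [Real.dimH_of_nonempty_interior (by simp)]
    simp
  have := h1'.trans hd
  rw [ENNReal.le_div_iff_mul_le (Or.inl (by simpa using hs)) (Or.inl ENNReal.coe_ne_top),
    one_mul] at this
  exact this

/-- For every `γ ∈ (0,1)`, the Hausdorff dimension of the generalized
Cantor set `C_γ` equals `log 2 / log (2/(1−γ))`. -/
theorem dimH_genCantorSet (γ : ℝ) (hγ : γ ∈ Set.Ioo (0 : ℝ) 1) :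
    dimH (genCantorSet γ) = ENNReal.ofReal (Real.log 2 / Real.log (2 / (1 - γ))) := by
  obtain ⟨h0, h1⟩ := hγ
  have hc : 0 < (1 - γ) / 2 := by linarith
  have hlt : 1 < 2 / (1 - γ) := by rw [lt_div_iff₀] <;> linarith
  have hlog := Real.log_pos hlt
  have hs : 0 < Real.log 2 / Real.log (2 / (1 - γ)) := div_pos (Real.log_pos one_lt_two) hlog
  have hcs : ((1 - γ) / 2) ^ (Real.log 2 / Real.log (2 / (1 - γ))) = 1 / 2 := by
    have e1 : Real.log ((1 - γ) / 2) = - Real.log (2 / (1 - γ)) := by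
      rw [← Real.log_inv, inv_div]
    rw [Real.rpow_def_of_pos hc, e1, neg_mul, mul_div_cancel₀ _ hlog.ne', Real.exp_neg,
      Real.exp_log two_pos, one_div]
  rw [genCantorSet_eq]
  exact le_antisymm (KK_dim_upper _ _ hc.le (by linarith) hs.le hcs)
    (KK_dim_lower _ _ hc (by linarith) hs hcs)
end

section
/- For every γ ∈ (0,1), let N_l denote the number of dyadic intervals [j·2^{-l}, (j+1)·2^{-l}] (0 ≤ j < 2^l) whose intersection with the generalized Cantor set C_γ is nonempty. Then lim_{l→∞} log₂(N_l)/l = log 2 / log(2/(1−γ)); i.e., the occupancy (box-counting dimension) of C_γ exists and equals its Hausdorff dimension. -/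
open Filter

lemma gc_summable {b a : ℝ} (hb0 : 0 ≤ b) (hb1 : b < 1) (d : ℕ → ℝ) (ha : 0 ≤ a)
    (hd : ∀ i, d i = 0 ∨ d i = a) : Summable (fun i => d i * b ^ i) := by
  refine Summable.of_nonneg_of_le (f := fun i => a * b ^ i) ?_ ?_ ?_
  · intro i
    have := pow_nonneg hb0 i
    rcases hd i with h | h <;> rw [h] <;> positivity
  · intro i
    have := pow_nonneg hb0 i
    rcases hd i with h | h <;> rw [h]
    simp; positivity
  · exact (summable_geometric_of_lt_one hb0 hb1).mul_left a

lemma gc_bounds {γ : ℝ} (hγ : γ ∈ Set.Ioo (0 : ℝ) 1) {x : ℝ} (hx : x ∈ genCantorSet γ) :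
    0 ≤ x ∧ x ≤ 1 := by
  obtain ⟨d, hd, rfl⟩ := hx
  obtain ⟨h0, h1⟩ := hγ
  have hb0 : 0 ≤ (1 - γ) / 2 := by linarith
  have hb1 : (1 - γ) / 2 < 1 := by linarith
  have ha : 0 ≤ (1 + γ) / 2 := by linarith
  have hs := gc_summable hb0 hb1 d ha hd
  constructor
  · apply tsum_nonneg
    intro i
    have := pow_nonneg hb0 i
    rcases hd i with h | h <;> rw [h] <;> positivity
  · have hg := (hasSum_geometric_of_lt_one hb0 hb1).mul_left ((1 + γ) / 2)
    have e : (1 + γ) / 2 * (1 - (1 - γ) / 2)⁻¹ = 1 := by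
      have : (1 - (1 - γ) / 2) = (1 + γ) / 2 := by ring
      rw [this]; exact mul_inv_cancel₀ (by linarith)
    rw [e] at hg
    refine hasSum_le ?_ hs.hasSum hg
    intro i
    have := pow_nonneg hb0 i
    rcases hd i with h | h <;> rw [h]
    simp; positivity

lemma gc_split {γ : ℝ} (hγ : γ ∈ Set.Ioo (0 : ℝ) 1) {x : ℝ} (hx : x ∈ genCantorSet γ) :
    ∃ y ∈ genCantorSet γ, x = (1 - γ) / 2 * y ∨ x = (1 + γ) / 2 + (1 - γ) / 2 * y := by
  obtain ⟨d, hd, rfl⟩ := hx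
  obtain ⟨h0, h1⟩ := hγ
  have hs := gc_summable (b := (1 - γ) / 2) (by linarith) (by linarith) d
    (show 0 ≤ (1 + γ) / 2 by linarith) hd
  refine ⟨_, ⟨fun i => d (i + 1), fun i => hd _, rfl⟩, ?_⟩
  rw [hs.tsum_eq_zero_add, ← tsum_mul_left]
  have : ∀ i, d (i + 1) * ((1 - γ) / 2) ^ (i + 1)
    = (1 - γ) / 2 * (d (i + 1) * ((1 - γ) / 2) ^ i) := fun i => by ring
  simp only [this]
  rcases hd 0 with h | h <;> simp [h]

lemma gc_join {γ : ℝ} (hγ : γ ∈ Set.Ioo (0 : ℝ) 1) {y c : ℝ} (hy : y ∈ genCantorSet γ)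
    (hc : c = 0 ∨ c = (1 + γ) / 2) : c + (1 - γ) / 2 * y ∈ genCantorSet γ := by
  obtain ⟨d, hd, rfl⟩ := hy
  obtain ⟨h0, h1⟩ := hγ
  have hd' : ∀ i, (fun i => Nat.casesOn i c d : ℕ → ℝ) i = 0 ∨
      (fun i => Nat.casesOn i c d : ℕ → ℝ) i = (1 + γ) / 2 := by
    intro i; cases i with
    | zero => exact hc
    | succ i => exact hd i
  have hs := gc_summable (b := (1 - γ) / 2) (by linarith) (by linarith) _
    (show 0 ≤ (1 + γ) / 2 by linarith) hd'
  refine ⟨_, hd', ?_⟩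
  rw [hs.tsum_eq_zero_add, ← tsum_mul_left]
  simp only [pow_zero, mul_one]
  congr 1
  apply tsum_congr
  intro i
  ring

lemma gc_cover {γ : ℝ} (hγ : γ ∈ Set.Ioo (0 : ℝ) 1) (k : ℕ) :
    ∃ A : Finset ℝ, A.card = 2 ^ k ∧ (∀ p ∈ A, p ∈ genCantorSet γ ∧ 0 ≤ p ∧ p < 1) ∧
      (∀ p ∈ A, ∀ q ∈ A, p ≠ q → γ * ((1 - γ) / 2) ^ k ≤ |p - q|) ∧
      ∀ x ∈ genCantorSet γ, ∃ p ∈ A, p ≤ x ∧ x ≤ p + ((1 - γ) / 2) ^ k := by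
  classical
  have h0 := hγ.1
  have h1 := hγ.2
  induction k with
  | zero =>
    refine ⟨{0}, by simp, ?_, ?_, ?_⟩
    · intro p hp
      rw [Finset.mem_singleton] at hp
      subst hp
      exact ⟨⟨fun _ => 0, fun _ => Or.inl rfl, by simp⟩, le_rfl, one_pos⟩
    · intro p hp q hq h
      simp_all
    · intro x hx
      have := gc_bounds hγ hx
      exact ⟨0, by simp, this.1, by simpa using this.2⟩
  | succ k ih =>
    obtain ⟨A, hc, hA, hsep, hcov⟩ := ih
    set b := (1 - γ) / 2 with hb
    have hb0 : 0 < b := by rw [hb]; linarith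
    have hb1 : b < 1 := by rw [hb]; linarith
    have hg : γ = 1 - 2 * b := by rw [hb]; ring
    have ha : (1 + γ) / 2 = 1 - b := by rw [hb]; ring
    have hpow : b ^ (k + 1) ≤ 1 := pow_le_one₀ hb0.le hb1.le
    have hgp : γ * b ^ (k + 1) ≤ γ := mul_le_of_le_one_right h0.le hpow
    have hlt : ∀ p ∈ A, 0 ≤ b * p ∧ b * p < b := by
      intro p hp
      have := hA p hp
      constructor
      · exact mul_nonneg hb0.le this.2.1
      · nlinarith
    have hs : ∀ p ∈ A, ∀ q ∈ A, p ≠ q → γ * b ^ (k + 1) ≤ b * |p - q| := by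
      intro p hp q hq h
      have := mul_le_mul_of_nonneg_left (hsep p hp q hq h) hb0.le
      calc γ * b ^ (k + 1) = b * (γ * b ^ k) := by ring
        _ ≤ _ := this
    refine ⟨A.image (fun p => b * p) ∪ A.image (fun p => (1 + γ) / 2 + b * p), ?_, ?_, ?_, ?_⟩
    · rw [Finset.card_union_of_disjoint, Finset.card_image_of_injective,
        Finset.card_image_of_injective, hc]
      · ring
      · intro p q h
        simpa [hb0.ne'] using h
      · intro p q h
        simpa [hb0.ne'] using h
      · rw [Finset.disjoint_left]
        intro x hx hy
        obtain ⟨p, hp, rfl⟩ := Finset.mem_image.1 hx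
        obtain ⟨q, hq, h⟩ := Finset.mem_image.1 hy
        have := hlt p hp
        have := hlt q hq
        linarith
    · intro x hx
      rcases Finset.mem_union.1 hx with hx | hx
      · obtain ⟨p, hp, rfl⟩ := Finset.mem_image.1 hx
        have := hlt p hp
        refine ⟨?_, this.1, by linarith⟩
        simpa using gc_join hγ (hA p hp).1 (Or.inl rfl)
      · obtain ⟨p, hp, rfl⟩ := Finset.mem_image.1 hx
        have := hlt p hp
        refine ⟨?_, by linarith, by linarith⟩
        exact gc_join hγ (hA p hp).1 (Or.inr rfl)
    · intro x hx y hy hxy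
      rcases Finset.mem_union.1 hx with hx | hx <;> rcases Finset.mem_union.1 hy with hy | hy <;>
      obtain ⟨p, hp, rfl⟩ := Finset.mem_image.1 hx <;>
      obtain ⟨q, hq, rfl⟩ := Finset.mem_image.1 hy <;>
      have hp' := hlt p hp <;> have hq' := hlt q hq
      · have : p ≠ q := by rintro rfl; exact hxy rfl
        rw [← mul_sub, abs_mul, abs_of_pos hb0]
        exact hs p hp q hq this
      · rw [abs_sub_comm]
        refine le_trans ?_ (le_abs_self _)
        linarith
      · refine le_trans ?_ (le_abs_self _)
        linarith
      · have : p ≠ q := by rintro rfl; exact hxy rfl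
        rw [add_sub_add_left_eq_sub, ← mul_sub, abs_mul, abs_of_pos hb0]
        exact hs p hp q hq this
    · intro x hx
      obtain ⟨y, hy, h⟩ := gc_split hγ hx
      rw [← hb] at h
      obtain ⟨p, hp, h2, h3⟩ := hcov y hy
      have h2' := mul_le_mul_of_nonneg_left h2 hb0.le
      have h3' := mul_le_mul_of_nonneg_left h3 hb0.le
      have e : b * (p + b ^ k) = b * p + b ^ (k + 1) := by ring
      rw [e] at h3'
      rcases h with h | h
      · exact ⟨b * p, Finset.mem_union_left _ (Finset.mem_image_of_mem _ hp),
          by rw [h]; exact h2', by rw [h]; exact h3'⟩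
      · exact ⟨(1 + γ) / 2 + b * p, Finset.mem_union_right _ (Finset.mem_image_of_mem (fun p => (1 + γ) / 2 + b * p) hp),
          by rw [h]; linarith, by rw [h]; linarith⟩

lemma gc_count {γ : ℝ} (hγ : γ ∈ Set.Ioo (0 : ℝ) 1) (l k : ℕ) (n : ℕ)
    (hn : n = {j : ℕ | j < 2 ^ l ∧
      (Set.Icc ((j : ℝ) / 2 ^ l) (((j : ℝ) + 1) / 2 ^ l) ∩ genCantorSet γ).Nonempty}.ncard) :
    (((1 - γ) / 2) ^ k * 2 ^ l ≤ 1 → n ≤ 3 * 2 ^ k) ∧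
    (1 ≤ γ * ((1 - γ) / 2) ^ k * 2 ^ l → 2 ^ k ≤ n) := by
  classical
  obtain ⟨A, hc, hA, hsep, hcov⟩ := gc_cover hγ k
  have hl : (0 : ℝ) < 2 ^ l := by positivity
  set S := {j : ℕ | j < 2 ^ l ∧
      (Set.Icc ((j : ℝ) / 2 ^ l) (((j : ℝ) + 1) / 2 ^ l) ∩ genCantorSet γ).Nonempty} with hS
  have hfin : S.Finite := (Set.finite_Iio (2 ^ l)).subset (fun j hj => hj.1)
  have hn' : n = hfin.toFinset.card := by rw [hn, Set.ncard_eq_toFinset_card S hfin]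
  constructor
  · intro hk
    have hsub : hfin.toFinset ⊆ A.biUnion
        (fun p => Finset.Icc (⌊2 ^ l * p⌋₊ - 1) (⌊2 ^ l * p⌋₊ + 1)) := by
      intro j hj
      rw [Set.Finite.mem_toFinset] at hj
      obtain ⟨hj, x, ⟨hx1, hx2⟩, hxC⟩ := hj
      obtain ⟨p, hp, h1, h2⟩ := hcov x hxC
      rw [Finset.mem_biUnion]
      refine ⟨p, hp, ?_⟩
      rw [div_le_iff₀ hl] at hx1
      rw [le_div_iff₀ hl] at hx2
      have hp0 := (hA p hp).2.1
      have h1' := mul_le_mul_of_nonneg_right h1 hl.le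
      have h2' := mul_le_mul_of_nonneg_right h2 hl.le
      have hpl : 0 ≤ 2 ^ l * p := by positivity
      have f1 := Nat.floor_le hpl
      have f2 := Nat.lt_floor_add_one (2 ^ l * p)
      have g1 : ((⌊2 ^ l * p⌋₊ : ℕ) : ℝ) ≤ ((j + 1 : ℕ) : ℝ) := by push_cast; linarith
      have g2 : (j : ℝ) < ((⌊2 ^ l * p⌋₊ + 2 : ℕ) : ℝ) := by push_cast; linarith
      rw [Nat.cast_le] at g1
      rw [Nat.cast_lt] at g2
      rw [Finset.mem_Icc]
      omega
    rw [hn', ← hc, mul_comm]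
    refine (Finset.card_le_card hsub).trans (Finset.card_biUnion_le_card_mul _ _ _ ?_)
    intro p hp
    rw [Nat.card_Icc]
    omega
  · intro hk
    rw [hn', ← hc]
    refine Finset.card_le_card_of_injOn (fun p => ⌊2 ^ l * p⌋₊) ?_ ?_
    · intro p hp
      have hp := hA p hp
      have hpl : 0 ≤ 2 ^ l * p := mul_nonneg hl.le hp.2.1
      have f1 := Nat.floor_le hpl
      have f2 := Nat.lt_floor_add_one (2 ^ l * p)
      simp only [Set.Finite.coe_toFinset]
      refine ⟨?_, p, ⟨?_, ?_⟩, hp.1⟩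
      · rw [Nat.floor_lt hpl]
        push_cast
        nlinarith
      · rw [div_le_iff₀ hl]; linarith
      · rw [le_div_iff₀ hl]; linarith
    · intro p hp q hq h
      by_contra hne
      have hs := hsep p hp q hq hne
      have h' : ⌊2 ^ l * p⌋₊ = ⌊2 ^ l * q⌋₊ := h
      have hpl : 0 ≤ 2 ^ l * p := mul_nonneg hl.le (hA p hp).2.1
      have hql : 0 ≤ 2 ^ l * q := mul_nonneg hl.le (hA q hq).2.1
      have f1 := Nat.floor_le hpl
      have f2 := Nat.lt_floor_add_one (2 ^ l * p)
      have f3 := Nat.floor_le hql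
      have f4 := Nat.lt_floor_add_one (2 ^ l * q)
      rw [← h'] at f3 f4
      have : |2 ^ l * p - 2 ^ l * q| < 1 := by
        rw [abs_lt]; constructor <;> linarith
      rw [← mul_sub, abs_mul, abs_of_pos hl] at this
      have := mul_le_mul_of_nonneg_left hs hl.le
      linarith

theorem genCantorSet_box_dimension (γ : ℝ) (hγ : γ ∈ Set.Ioo (0 : ℝ) 1)
    (N : ℕ → ℕ)
    (hN : ∀ l, N l = {j : ℕ | j < 2 ^ l ∧
      (Set.Icc ((j : ℝ) / 2 ^ l) (((j : ℝ) + 1) / 2 ^ l) ∩ genCantorSet γ).Nonempty}.ncard) :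
    Tendsto (fun l : ℕ => Real.logb 2 (N l) / l) atTop
      (nhds (Real.log 2 / Real.log (2 / (1 - γ)))) := by
  have h0 := hγ.1
  have h1 := hγ.2
  have hb0 : 0 < (1 - γ) / 2 := by linarith
  have e : Real.log (2 / (1 - γ)) = - Real.log ((1 - γ) / 2) := by
    rw [← Real.log_inv, inv_div]
  rw [e]
  have hcount := fun l k => gc_count hγ l k (N l) (hN l)
  set b := (1 - γ) / 2 with hb
  set B := - Real.log b with hB
  have hBpos : 0 < B := by
    have := Real.log_neg hb0 (by rw [hb]; linarith)
    linarith
  have hL : 0 < Real.log 2 := Real.log_pos (by norm_num)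
  set D := Real.log 2 / B with hD
  have hDpos : 0 < D := div_pos hL hBpos
  set c := - Real.log γ / B with hc
  have hcpos : 0 < c := div_pos (by have := Real.log_neg h0 h1; linarith) hBpos
  -- eventual bounds
  have hbd : ∀ᶠ l : ℕ in atTop, D * l - (c + 1) ≤ Real.logb 2 (N l) ∧
      Real.logb 2 (N l) ≤ D * l + (1 + Real.logb 2 3) := by
    obtain ⟨l0, hl0⟩ := exists_nat_ge (c / D)
    filter_upwards [eventually_ge_atTop l0] with l hl
    have hlc : c ≤ D * l := by
      rw [div_le_iff₀ hDpos] at hl0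
      have : (l0 : ℝ) ≤ l := by exact_mod_cast hl
      nlinarith
    have hDB : D * B = Real.log 2 := div_mul_cancel₀ _ hBpos.ne'
    have hcB : c * B = - Real.log γ := div_mul_cancel₀ _ hBpos.ne'
    have low : (2 : ℕ) ^ ⌊D * l - c⌋₊ ≤ N l := by
      apply (hcount l _).2
      have hf := Nat.floor_le (show 0 ≤ D * l - c by linarith)
      rw [← Real.log_nonneg_iff (by positivity), Real.log_mul (by positivity) (by positivity),
        Real.log_mul (by positivity) (by positivity), Real.log_pow, Real.log_pow]
      have := mul_le_mul_of_nonneg_right hf hBpos.le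
      have e2 : Real.log b = -B := by rw [hB]; ring
      rw [e2]
      have e3 : (D * l - c) * B = l * Real.log 2 + Real.log γ := by
        rw [← hDB]; linear_combination -hcB
      linarith
    have up : N l ≤ 3 * 2 ^ ⌈D * l⌉₊ := by
      apply (hcount l _).1
      have hf := Nat.le_ceil (D * l)
      rw [← Real.log_nonpos_iff (by positivity), Real.log_mul (by positivity) (by positivity),
        Real.log_pow, Real.log_pow]
      have := mul_le_mul_of_nonneg_right hf hBpos.le
      have e2 : Real.log b = -B := by rw [hB]; ring
      rw [e2]
      have e3 : (D * l) * B = l * Real.log 2 := by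
        rw [← hDB]; ring
      linarith
    have hNpos : (0 : ℝ) < N l := by
      have : 0 < N l := lt_of_lt_of_le (by positivity) low
      exact_mod_cast this
    constructor
    · have h := Nat.lt_floor_add_one (D * l - c)
      have low' : (2 : ℝ) ^ ⌊D * l - c⌋₊ ≤ N l := by exact_mod_cast low
      have := Real.logb_le_logb_of_le (b := 2) (by norm_num) (by positivity) low'
      rw [Real.logb_pow, Real.logb_self_eq_one (by norm_num)] at this
      linarith
    · have h := Nat.ceil_lt_add_one (show 0 ≤ D * l by positivity)
      have up' : (N l : ℝ) ≤ 3 * 2 ^ ⌈D * l⌉₊ := by exact_mod_cast up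
      have := Real.logb_le_logb_of_le (b := 2) (by norm_num) hNpos up'
      rw [Real.logb_mul (by norm_num) (by positivity), Real.logb_pow,
        Real.logb_self_eq_one (by norm_num)] at this
      linarith
  have t1 : Tendsto (fun l : ℕ => D - (c + 1) / (l : ℝ)) atTop (nhds D) := by
    simpa using tendsto_const_nhds.sub (tendsto_const_div_atTop_nhds_zero_nat (c + 1))
  have t2 : Tendsto (fun l : ℕ => D + (1 + Real.logb 2 3) / (l : ℝ)) atTop (nhds D) := by
    simpa using tendsto_const_nhds.add
      (tendsto_const_div_atTop_nhds_zero_nat (1 + Real.logb 2 3))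
  refine tendsto_of_tendsto_of_tendsto_of_le_of_le' t1 t2 ?_ ?_
  · filter_upwards [hbd, eventually_gt_atTop 0] with l h hl
    have hl' : (0 : ℝ) < l := by exact_mod_cast hl
    rw [le_div_iff₀ hl', sub_mul, div_mul_cancel₀ _ hl'.ne']
    exact h.1
  · filter_upwards [hbd, eventually_gt_atTop 0] with l h hl
    have hl' : (0 : ℝ) < l := by exact_mod_cast hl
    rw [div_le_iff₀ hl', add_mul, div_mul_cancel₀ _ hl'.ne']
    exact h.2
end

section
/- There exists a nonempty compact set X ⊆ [0,1] such that, letting N_l denote the number of dyadic intervals [j·2^{-l}, (j+1)·2^{-l}] (0 ≤ j < 2^l) whose intersection with X is nonempty, the sequence log₂(N_l)/l does not converge as l → ∞ (i.e., the box-counting dimension of X is not defined). -/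
open Filter

/-- The example set. -/
def boxX : Set ℝ := Set.Icc 0 1 ∩ ⋂ k : ℕ, ({x : ℝ | x ≤ 1 / 2 ^ (8 ^ (k+1))} ∪
  {x : ℝ | x * 2 ^ (2 * 8 ^ k) ∈ Set.range (Int.cast : ℤ → ℝ)})

/-- The indices of the dyadic intervals meeting the example set. -/
def boxN (l : ℕ) : Set ℕ := {j : ℕ | j < 2 ^ l ∧
            (Set.Icc ((j : ℝ) / 2 ^ l) (((j : ℝ) + 1) / 2 ^ l) ∩ boxX).Nonempty}

lemma boxX_closed : IsClosed boxX := by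
  refine isClosed_Icc.inter (isClosed_iInter fun k => IsClosed.union ?_ ?_)
  · exact isClosed_Iic
  · have h : IsClosed (Set.range (Int.cast : ℤ → ℝ)) :=
      Int.isClosedEmbedding_coe_real.isClosed_range
    exact h.preimage (f := fun x : ℝ => x * 2 ^ (2 * 8 ^ k)) (by fun_prop)

lemma boxX_zero : (0:ℝ) ∈ boxX := by
  refine ⟨by simp, Set.mem_iInter.2 fun k => Or.inl ?_⟩
  show (0:ℝ) ≤ _
  positivity

lemma boxN_finite (l : ℕ) : (boxN l).Finite :=
  (Set.finite_lt_nat (2 ^ l)).subset fun _ h => h.1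

lemma boxN_lower (k : ℕ) : 2 ^ (8 ^ k) ≤ (boxN (2 * 8 ^ k)).ncard := by
  have hsub : ((Finset.range (2 ^ (8 ^ k)) : Finset ℕ) : Set ℕ) ⊆ boxN (2 * 8 ^ k) := by
    intro j hj
    have hj : j < 2 ^ (8 ^ k) := by simpa using hj
    have hjr : (j:ℝ) ≤ 2 ^ (8 ^ k) := by exact_mod_cast hj.le
    have hx : (j:ℝ) / 2 ^ (2 * 8 ^ k) ≤ 1 / 2 ^ (8 ^ k) := by
      rw [div_le_div_iff₀ (by positivity) (by positivity), two_mul, pow_add, one_mul]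
      gcongr
    refine ⟨hj.trans_le (Nat.pow_le_pow_right (by norm_num) (by omega)),
      (j:ℝ) / 2 ^ (2 * 8 ^ k), ⟨le_rfl, by gcongr; linarith⟩, ⟨by positivity, hx.trans ?_⟩,
      Set.mem_iInter.2 fun m => ?_⟩
    · rw [div_le_one (by positivity)]
      exact one_le_pow₀ (by norm_num)
    · rcases lt_or_ge m k with h | h
      · left
        refine hx.trans ?_
        have : 8 ^ (m+1) ≤ 8 ^ k := Nat.pow_le_pow_right (by norm_num) h
        exact one_div_le_one_div_of_le (by positivity) (pow_le_pow_right₀ (by norm_num) this)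
      · right
        have : 8 ^ k ≤ 8 ^ m := Nat.pow_le_pow_right (by norm_num) h
        obtain ⟨c, hc⟩ := Nat.exists_eq_add_of_le (Nat.mul_le_mul_left 2 this)
        refine ⟨j * 2 ^ c, ?_⟩
        rw [hc, pow_add]
        push_cast
        field_simp
  have := Set.ncard_le_ncard hsub (boxN_finite _)
  rwa [Set.ncard_coe_finset, Finset.card_range] at this

lemma boxN_upper (k : ℕ) : (boxN (8 ^ (k+1))).ncard ≤ 2 ^ (2 * 8 ^ k + 3) := by
  set b := 2 * 8 ^ k with hb
  obtain ⟨c, hc⟩ : ∃ c, 8 ^ (k+1) = b + c := ⟨6 * 8 ^ k, by rw [hb, pow_succ]; ring⟩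
  have hsub : boxN (8 ^ (k+1)) ⊆ ((({0, 1} : Finset ℕ) ∪
      ((Finset.range (2 ^ b + 1)).image (fun i => i * 2 ^ c) ∪
       (Finset.range (2 ^ b + 1)).image (fun i => i * 2 ^ c - 1)) : Finset ℕ) : Set ℕ) := by
    rintro j ⟨-, x, ⟨h1, h2⟩, ⟨h3, h4⟩, h5⟩
    rw [div_le_iff₀ (by positivity)] at h1
    rw [le_div_iff₀ (by positivity)] at h2
    simp only [Finset.coe_union, Set.mem_union, Finset.mem_coe, Finset.mem_image,
      Finset.mem_range, Finset.mem_insert, Finset.mem_singleton]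
    rcases Set.mem_iInter.1 h5 k with h | ⟨i, hi⟩
    · left
      have h : x ≤ 1 / 2 ^ (8 ^ (k+1)) := h
      rw [le_div_iff₀ (by positivity)] at h
      have : j ≤ 1 := by exact_mod_cast h1.trans h
      omega
    · right
      rw [← hb] at hi
      have i0 : (0:ℤ) ≤ i := by
        have : (0:ℝ) ≤ i := by rw [hi]; positivity
        exact_mod_cast this
      lift i to ℕ using i0
      rw [Int.cast_natCast] at hi
      have i1 : i ≤ 2 ^ b := by
        have : (i:ℝ) ≤ 2 ^ b := by
          rw [hi]; exact mul_le_of_le_one_left (by positivity) h4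
        exact_mod_cast this
      rw [hc, pow_add, ← mul_assoc, ← hi] at h1 h2
      have e1 : j ≤ i * 2 ^ c := by exact_mod_cast h1
      have e2 : i * 2 ^ c ≤ j + 1 := by exact_mod_cast h2
      rcases (show i * 2 ^ c = j ∨ i * 2 ^ c - 1 = j by omega) with h | h
      · exact Or.inl ⟨i, by omega, h⟩
      · exact Or.inr ⟨i, by omega, h⟩
  have h := Set.ncard_le_ncard hsub (Finset.finite_toSet _)
  rw [Set.ncard_coe_finset] at h
  refine h.trans ((Finset.card_union_le _ _).trans ?_)
  have g1 := Finset.card_union_le ((Finset.range (2 ^ b + 1)).image (fun i => i * 2 ^ c))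
    ((Finset.range (2 ^ b + 1)).image (fun i => i * 2 ^ c - 1))
  have g2 := Finset.card_image_le (s := Finset.range (2 ^ b + 1)) (f := fun i => i * 2 ^ c)
  have g3 := Finset.card_image_le (s := Finset.range (2 ^ b + 1)) (f := fun i => i * 2 ^ c - 1)
  rw [Finset.card_range] at g2 g3
  have g4 : ({0, 1} : Finset ℕ).card = 2 := rfl
  have g5 : 1 ≤ 2 ^ b := Nat.one_le_two_pow
  rw [pow_add]
  omega

/-- There exists a nonempty compact set `X ⊆ [0,1]` such that, with
`N l` the number of dyadic intervals `[j·2^{-l}, (j+1)·2^{-l}]` (`0 ≤ j < 2^l`) meeting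
`X`, the sequence `log₂(N l)/l` does not converge as `l → ∞`; i.e., the box-counting
dimension of `X` is not defined. -/
theorem exists_compact_without_box_dimension :
    ∃ X : Set ℝ, X.Nonempty ∧ IsCompact X ∧ X ⊆ Set.Icc 0 1 ∧
      ¬ ∃ d : ℝ, Tendsto (fun l : ℕ =>
          Real.logb 2 (({j : ℕ | j < 2 ^ l ∧
            (Set.Icc ((j : ℝ) / 2 ^ l) (((j : ℝ) + 1) / 2 ^ l) ∩ X).Nonempty}.ncard : ℝ)) / l)
        atTop (nhds d) := by
  refine ⟨boxX, ⟨0, boxX_zero⟩, isCompact_Icc.of_isClosed_subset boxX_closed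
    Set.inter_subset_left, Set.inter_subset_left, ?_⟩
  rintro ⟨d, hd⟩
  change Tendsto (fun l : ℕ => Real.logb 2 ((boxN l).ncard : ℝ) / l) atTop (nhds d) at hd
  have t8 : Tendsto (fun k : ℕ => 8 ^ k) atTop atTop :=
    tendsto_pow_atTop_atTop_of_one_lt (by norm_num)
  have t1 : Tendsto (fun k : ℕ => 2 * 8 ^ k) atTop atTop :=
    tendsto_atTop_mono (fun k => by show 8 ^ k ≤ 2 * 8 ^ k; omega) t8
  have t2 : Tendsto (fun k : ℕ => 8 ^ (k+1)) atTop atTop := t8.comp (tendsto_add_atTop_nat 1)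
  have l1 : 1 / 2 ≤ d := by
    refine ge_of_tendsto' (hd.comp t1) fun k => ?_
    have hN : ((2:ℝ) ^ (8 ^ k)) ≤ ((boxN (2 * 8 ^ k)).ncard : ℝ) := by
      exact_mod_cast boxN_lower k
    have := Real.logb_le_logb_of_le (b := 2) (by norm_num) (by positivity) hN
    rw [Real.logb_pow, Real.logb_self_eq_one (by norm_num)] at this
    show _ ≤ _ / _
    rw [le_div_iff₀ (by positivity)]
    refine le_trans (le_of_eq ?_) this
    push_cast
    ring
  have l2 : d ≤ 3 / 8 := by
    refine le_of_tendsto (hd.comp t2) ?_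
    filter_upwards [eventually_ge_atTop 1] with k hk
    have hp : 0 < (boxN (8 ^ (k+1))).ncard := by
      refine (Set.ncard_pos (boxN_finite _)).2 ⟨0, by positivity, 0, ⟨?_, ?_⟩, boxX_zero⟩
      · simp
      · positivity
    have hN : ((boxN (8 ^ (k+1))).ncard : ℝ) ≤ (2:ℝ) ^ (2 * 8 ^ k + 3) := by
      exact_mod_cast boxN_upper k
    have := Real.logb_le_logb_of_le (b := 2) (by norm_num) (by exact_mod_cast hp) hN
    rw [Real.logb_pow, Real.logb_self_eq_one (by norm_num)] at this
    show _ / _ ≤ _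
    rw [div_le_iff₀ (by positivity)]
    refine this.trans ?_
    have h8 : (8:ℝ) ^ 1 ≤ 8 ^ k := pow_le_pow_right₀ (by norm_num) hk
    push_cast
    rw [pow_succ]
    linarith
  linarith
end
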